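/- arXiv:2406.09518 — 2 statements merged into one kernel-verified Lean document; each statement's English description precedes it below -/
import Mathlib

section
/- Let S be a finite set of positive integers with the gcd-property, and suppose S has at least 2 elements. Then every element of S is squarefree, i.e., no element of S is divisible by the square of a prime. -/
/-!
Fix `s ∈ S`. The gcd-property says that `t ↦ gcd s t` is a bijection from `S` onto the divisors
of `s`. If a prime `p` divides `s` exactly `e ≥ 1` times, then a proportion `1 / (e + 1)` of these
divisors is prime to `p`, and since `p ∣ s` they correspond to the elements of `S` prime to `p`.
Hence `e` depends only on `S` and `p`: all multiples of `p` in `S` have the same `p`-adic valuation.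
As some `t ∈ S` satisfies `gcd s t = p`, this common valuation is `1`.
-/

/-- The gcd-property: `t ↦ gcd s t` takes each positive divisor of each `s ∈ S` as a value
exactly once on `S`. Neither finiteness of `S` nor positivity of its elements is part of the
definition. -/
def HasGCDProperty (S : Set ℕ) : Prop :=
  ∀ s ∈ S, ∀ d : ℕ, 0 < d → d ∣ s → ∃! t, t ∈ S ∧ Nat.gcd s t = d

theorem dvd_ordCompl_iff_not_dvd {p n d : ℕ} (hp : p.Prime) (hn : n ≠ 0) (hd : d ∣ n) :
    d ∣ ordCompl[p] n ↔ ¬p ∣ d :=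
  ⟨fun h hpd ↦ Nat.not_dvd_ordCompl hp hn (hpd.trans h), Nat.dvd_ordCompl_of_dvd_not_dvd hd⟩

theorem card_divisors_eq_factorization_add_one_mul {p n : ℕ} (hp : p.Prime) (hn : n ≠ 0) :
    n.divisors.card = (n.factorization p + 1) * (ordCompl[p] n).divisors.card := by
  have hcoprime : (ordProj[p] n).Coprime (ordCompl[p] n) :=
    (Nat.coprime_ordCompl hp hn).pow_left _
  calc n.divisors.card = (ordProj[p] n * ordCompl[p] n).divisors.card := by
        rw [Nat.ordProj_mul_ordCompl_eq_self]
    _ = (ordProj[p] n).divisors.card * (ordCompl[p] n).divisors.card :=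
        hcoprime.card_divisors_mul
    _ = (n.factorization p + 1) * (ordCompl[p] n).divisors.card := by
        rw [Nat.divisors_prime_pow hp, Finset.card_map, Finset.card_range]

namespace HasGCDProperty

variable {S : Set ℕ} {s t p : ℕ}

theorem bijOn_gcd (hS : HasGCDProperty S) (hs : s ∈ S) (hs₀ : s ≠ 0) :
    Set.BijOn s.gcd S s.divisors := by
  refine ⟨fun t _ ↦ ?_, fun t ht u hu htu ↦ ?_, fun d hd ↦ ?_⟩
  · exact Nat.mem_divisors.2 ⟨Nat.gcd_dvd_left s t, hs₀⟩
  · exact (hS s hs (s.gcd u) (Nat.gcd_pos_of_pos_left u (Nat.pos_of_ne_zero hs₀))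
      (Nat.gcd_dvd_left s u)).unique ⟨ht, htu⟩ ⟨hu, rfl⟩
  · exact (hS s hs d (Nat.pos_of_mem_divisors hd) (Nat.dvd_of_mem_divisors hd)).exists

theorem ncard_eq_card_divisors (hS : HasGCDProperty S) (hs : s ∈ S) (hs₀ : s ≠ 0) :
    S.ncard = s.divisors.card := by
  rw [(hS.bijOn_gcd hs hs₀).ncard_eq, Set.ncard_coe_finset]

theorem ncard_not_dvd_eq_card_divisors_ordCompl (hS : HasGCDProperty S) (hs : s ∈ S)
    (hs₀ : s ≠ 0) (hp : p.Prime) (hps : p ∣ s) :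
    {t ∈ S | ¬p ∣ t}.ncard = (ordCompl[p] s).divisors.card := by
  have hbij := hS.bijOn_gcd hs hs₀
  have himage : s.gcd '' {t ∈ S | ¬p ∣ t} = (ordCompl[p] s).divisors := by
    ext d
    have hcompl : ordCompl[p] s ≠ 0 := (Nat.ordCompl_pos p hs₀).ne'
    constructor
    · rintro ⟨t, ⟨-, hpt⟩, rfl⟩
      have hpgcd : ¬p ∣ s.gcd t := fun h ↦ hpt (h.trans (Nat.gcd_dvd_right s t))
      exact Nat.mem_divisors.2
        ⟨(dvd_ordCompl_iff_not_dvd hp hs₀ (Nat.gcd_dvd_left s t)).2 hpgcd, hcompl⟩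
    · intro hd
      have hdc : d ∣ ordCompl[p] s := Nat.dvd_of_mem_divisors hd
      have hds : d ∣ s := hdc.trans (Nat.ordCompl_dvd s p)
      obtain ⟨t, ht, rfl⟩ := hbij.surjOn (Nat.mem_divisors.2 ⟨hds, hs₀⟩)
      have hpgcd : ¬p ∣ s.gcd t := (dvd_ordCompl_iff_not_dvd hp hs₀ hds).1 hdc
      exact ⟨t, ⟨ht, fun hpt ↦ hpgcd (Nat.dvd_gcd hps hpt)⟩, rfl⟩
  rw [← Set.ncard_coe_finset, ← himage, (hbij.injOn.mono (Set.sep_subset _ _)).ncard_image]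

theorem ncard_eq_factorization_add_one_mul (hS : HasGCDProperty S) (hs : s ∈ S) (hs₀ : s ≠ 0)
    (hp : p.Prime) (hps : p ∣ s) :
    S.ncard = (s.factorization p + 1) * {t ∈ S | ¬p ∣ t}.ncard := by
  rw [hS.ncard_eq_card_divisors hs hs₀, hS.ncard_not_dvd_eq_card_divisors_ordCompl hs hs₀ hp hps,
    card_divisors_eq_factorization_add_one_mul hp hs₀]

theorem factorization_eq_factorization (hS : HasGCDProperty S) (hs : s ∈ S) (hs₀ : s ≠ 0)
    (ht : t ∈ S) (ht₀ : t ≠ 0) (hp : p.Prime) (hps : p ∣ s) (hpt : p ∣ t) :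
    s.factorization p = t.factorization p := by
  have hpos : 0 < {t ∈ S | ¬p ∣ t}.ncard := by
    rw [hS.ncard_not_dvd_eq_card_divisors_ordCompl hs hs₀ hp hps, Finset.card_pos,
      Nat.nonempty_divisors]
    exact (Nat.ordCompl_pos p hs₀).ne'
  have hmul : (s.factorization p + 1) * {t ∈ S | ¬p ∣ t}.ncard =
      (t.factorization p + 1) * {t ∈ S | ¬p ∣ t}.ncard := by
    rw [← hS.ncard_eq_factorization_add_one_mul hs hs₀ hp hps,
      ← hS.ncard_eq_factorization_add_one_mul ht ht₀ hp hpt]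
  exact Nat.succ_injective (Nat.eq_of_mul_eq_mul_right hpos hmul)

theorem factorization_eq_one (hS : HasGCDProperty S) (hpos : ∀ s ∈ S, 0 < s) (hs : s ∈ S)
    (hp : p.Prime) (hps : p ∣ s) : s.factorization p = 1 := by
  obtain ⟨t, ⟨ht, hgcd⟩, -⟩ := hS s hs p hp.pos hps
  have hs₀ : s ≠ 0 := (hpos s hs).ne'
  have ht₀ : t ≠ 0 := (hpos t ht).ne'
  have hpt : p ∣ t := hgcd ▸ Nat.gcd_dvd_right s t
  have heq : s.factorization p = t.factorization p :=
    hS.factorization_eq_factorization hs hs₀ ht ht₀ hp hps hpt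
  calc s.factorization p = min (s.factorization p) (t.factorization p) := by rw [heq, min_self]
    _ = (s.gcd t).factorization p := by rw [Nat.factorization_gcd hs₀ ht₀, Finsupp.inf_apply]
    _ = 1 := by rw [hgcd, hp.factorization_self]

end HasGCDProperty

theorem usamo2021_p4_squarefree_general (S : Set ℕ) (hpos : ∀ s ∈ S, 0 < s)
    (hgcd : HasGCDProperty S) : ∀ s ∈ S, Squarefree s := by
  intro s hs
  refine Nat.squarefree_of_factorization_le_one (hpos s hs).ne' fun p ↦ ?_
  by_cases hp : p ∈ s.primeFactors
  · exact (hgcd.factorization_eq_one hpos hs (Nat.prime_of_mem_primeFactors hp)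
      (Nat.dvd_of_mem_primeFactors hp)).le
  · have hzero : s.factorization p = 0 := Finsupp.notMem_support_iff.1 hp
    exact hzero.trans_le zero_le_one

/-- If a finite set `S` of positive integers with at least two elements has the gcd-property,
then every element of `S` is squarefree. -/
theorem usamo2021_p4_squarefree (S : Finset ℕ) (hpos : ∀ s ∈ S, 0 < s)
    (hcard : 2 ≤ S.card)
    (hgcd : ∀ s ∈ S, ∀ d : ℕ, 0 < d → d ∣ s → ∃! t, t ∈ S ∧ Nat.gcd s t = d) :
    ∀ s ∈ S, Squarefree s :=
  usamo2021_p4_squarefree_general S hpos hgcd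
end

section
/- Let ABCDEF be a convex hexagon in the Euclidean plane satisfying AB ∥ DE, BC ∥ EF, CD ∥ FA, and AB·DE = BC·EF = CD·FA, with A, C, E not collinear, and define A′ = C + E − D, C′ = E + A − F, E′ = A + C − B (so that CDEA′, EFAC′, and ABCE′ are parallelograms). If A′, C′, E′ are not collinear, then the circumcenter of triangle ACE coincides with the circumcenter of triangle A′C′E′. -/
open EuclideanGeometry Affine

local notation "Pt" => EuclideanSpace ℝ (Fin 2)

/-- The four points `X`, `Y`, `Z`, `W` lie strictly on the same side of the line `PQ`. -/
def SameSideOfLine (P Q X Y Z W : EuclideanSpace ℝ (Fin 2)) : Prop :=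
  (affineSpan ℝ {P, Q}).SSameSide X Y ∧ (affineSpan ℝ {P, Q}).SSameSide X Z ∧
    (affineSpan ℝ {P, Q}).SSameSide X W

/-- `ABCDEF` is a convex hexagon (vertices in this cyclic order): for each side, the four
remaining vertices lie strictly on the same side of the line containing that side. -/
def ConvexHexagon (A B C D E F : EuclideanSpace ℝ (Fin 2)) : Prop :=
  SameSideOfLine A B C D E F ∧ SameSideOfLine B C D E F A ∧ SameSideOfLine C D E F A B ∧
    SameSideOfLine D E F A B C ∧ SameSideOfLine E F A B C D ∧ SameSideOfLine F A B C D E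

/-!
Write `A'`, `C'`, `E'` for the three parallelogram vertices. Since `A' - C = E - D` and
`E' - C = A - B` are parallel, `C` lies on the line `A'E'`, and its power with respect to the
circle `A'C'E'` is `⟪A' - C, E' - C⟫ = -⟪B - A, E - D⟫`; likewise for `A` and `E`. Hence `A`, `C`
and `E` have equal powers with respect to that circle, i.e. they are equidistant from its centre.
Convexity makes opposite sides point in opposite directions, so that the products of their lengths
are these inner products up to sign.
-/

open scoped RealInnerProductSpace

theorem mem_line_of_vsub_eq_smul_vsub {k V P : Type*} [DivisionRing k] [AddCommGroup V]
    [Module k V] [AddTorsor V P] {p a b : P} (hab : a ≠ b)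
    (h : ∃ r : k, a -ᵥ p = r • (b -ᵥ p)) : p ∈ line[k, a, b] := by
  obtain ⟨r, hr⟩ := h
  have hcol : Collinear k {p, a, b} := by
    rw [collinear_iff_of_mem (Set.mem_insert p _)]
    refine ⟨b -ᵥ p, ?_⟩
    rintro q (rfl | rfl | rfl)
    · exact ⟨0, by simp⟩
    · exact ⟨r, by rw [← hr, vsub_vadd]⟩
    · exact ⟨1, by simp⟩
  exact hcol.mem_affineSpan_of_mem_of_ne (by simp) (by simp) (by simp) hab

section Power

variable {V P : Type*} [NormedAddCommGroup V] [InnerProductSpace ℝ V] [MetricSpace P]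
  [NormedAddTorsor V P]

theorem inner_vsub_vsub_eq_power_of_mem_line {s : Sphere P} {p a b : P} (hp : p ∈ line[ℝ, a, b])
    (ha : a ∈ s) (hb : b ∈ s) : ⟪a -ᵥ p, b -ᵥ p⟫ = s.power p := by
  obtain ⟨t, rfl⟩ := mem_affineSpan_pair_iff_exists_lineMap_eq.1 hp
  set x := a -ᵥ s.center
  set y := b -ᵥ s.center
  have hab : b -ᵥ a = y - x := (vsub_sub_vsub_cancel_right b a s.center).symm
  have hxx : ⟪x, x⟫ = s.radius ^ 2 := by
    rw [real_inner_self_eq_norm_sq, ← dist_eq_norm_vsub, mem_sphere.1 ha]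
  have hyy : ⟪y, y⟫ = s.radius ^ 2 := by
    rw [real_inner_self_eq_norm_sq, ← dist_eq_norm_vsub, mem_sphere.1 hb]
  have hpa : a -ᵥ AffineMap.lineMap a b t = t • (x - y) := by
    rw [AffineMap.left_vsub_lineMap, ← neg_vsub_eq_vsub_rev, hab, neg_sub]
  have hpb : b -ᵥ AffineMap.lineMap a b t = (1 - t) • (y - x) := by
    rw [AffineMap.right_vsub_lineMap, hab]
  have hpo : AffineMap.lineMap a b t -ᵥ s.center = t • (y - x) + x := by
    rw [AffineMap.lineMap_apply, vadd_vsub_assoc, hab]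
  rw [Sphere.power, dist_eq_norm_vsub V, ← real_inner_self_eq_norm_sq, hpa, hpb, hpo]
  simp only [inner_add_left, inner_add_right, inner_sub_left, inner_sub_right,
    real_inner_smul_left, real_inner_smul_right, real_inner_comm x y, hxx, hyy]
  ring

theorem mem_affineSpan_and_power_eq_inner_of_vsub_eq_smul_vsub {n : ℕ} {T : Simplex ℝ P n}
    {i j : Fin (n + 1)} {p : P} (hij : i ≠ j)
    (h : ∃ r : ℝ, T.points i -ᵥ p = r • (T.points j -ᵥ p)) :
    p ∈ affineSpan ℝ (Set.range T.points) ∧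
      T.circumsphere.power p = ⟪T.points i -ᵥ p, T.points j -ᵥ p⟫ := by
  have hp : p ∈ line[ℝ, T.points i, T.points j] :=
    mem_line_of_vsub_eq_smul_vsub (T.independent.injective.ne hij) h
  exact ⟨affineSpan_pair_le_of_mem_of_mem (mem_affineSpan ℝ (Set.mem_range_self i))
      (mem_affineSpan ℝ (Set.mem_range_self j)) hp,
    (inner_vsub_vsub_eq_power_of_mem_line hp (T.mem_circumsphere i) (T.mem_circumsphere j)).symm⟩

theorem circumcenter_eq_of_power_eq {n : ℕ} {S T : Simplex ℝ P n} {c : ℝ}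
    (hmem : ∀ i, S.points i ∈ affineSpan ℝ (Set.range T.points))
    (hpow : ∀ i, T.circumsphere.power (S.points i) = c) : S.circumcenter = T.circumcenter := by
  have hspan : affineSpan ℝ (Set.range S.points) = affineSpan ℝ (Set.range T.points) := by
    refine S.independent.affineSpan_eq_of_le_of_card_eq_finrank_add_one
      (affineSpan_le.2 (Set.range_subset_iff.2 hmem)) ?_
    rw [direction_affineSpan, T.independent.finrank_vectorSpan (Fintype.card_fin _),
      Fintype.card_fin]
  have hcenter : T.circumcenter ∈ affineSpan ℝ (Set.range S.points) :=
    hspan ▸ T.circumcenter_mem_affineSpan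
  refine (S.eq_circumcenter_of_dist_eq hcenter (r := √(c + T.circumradius ^ 2)) fun i ↦ ?_).symm
  have hdist : dist (S.points i) T.circumcenter ^ 2 = c + T.circumradius ^ 2 :=
    sub_eq_iff_eq_add.1 (hpow i)
  rw [← hdist, Real.sqrt_sq dist_nonneg]

end Power

section Orientation

variable {V P : Type*} [NormedAddCommGroup V] [InnerProductSpace ℝ V] [MetricSpace P]
  [NormedAddTorsor V P] [Fact (Module.finrank ℝ V = 2)]

theorem oangle_sign_eq_of_sSameSide_line [Module.Oriented ℝ V (Fin 2)] {p q x y : P}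
    (h : line[ℝ, p, q].SSameSide x y) : (∡ p q x).sign = (∡ p q y).sign := by
  rw [← oangle_swap₂₃_sign p x q, ← oangle_swap₂₃_sign p y q,
    h.oangle_sign_eq (left_mem_affineSpan_pair ℝ p q) (right_mem_affineSpan_pair ℝ p q)]

theorem oangle_sign_eq_neg_sign_mul_of_vsub_eq_smul_vsub [Module.Oriented ℝ V (Fin 2)]
    {a b d e : P} {r : ℝ} (h : e -ᵥ d = r • (b -ᵥ a)) :
    (∡ d e a).sign = -(SignType.sign r * (∡ a b d).sign) := by
  rw [oangle_rotate_sign a d e, oangle_rotate_sign d a b, oangle, oangle, h,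
    Orientation.oangle_sign_smul_right, ← neg_vsub_eq_vsub_rev d a,
    Orientation.oangle_sign_neg_left, mul_neg]

theorem neg_of_vsub_eq_smul_vsub_of_sSameSide {a b c d e : P} {r : ℝ}
    (hab : line[ℝ, a, b].SSameSide c d) (hbc : line[ℝ, b, c].SSameSide d a)
    (hcd : line[ℝ, c, d].SSameSide e b) (hde : line[ℝ, d, e].SSameSide a c)
    (h : e -ᵥ d = r • (b -ᵥ a)) : r < 0 := by
  have : Module.Finite ℝ V := FiniteDimensional.of_fact_finrank_eq_two
  let : Module.Oriented ℝ V (Fin 2) :=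
    ⟨(Module.finBasisOfFinrankEq ℝ V Fact.out).orientation⟩
  have hturn : (∡ a b d).sign = (∡ d e a).sign :=
    calc (∡ a b d).sign = (∡ a b c).sign := (oangle_sign_eq_of_sSameSide_line hab).symm
      _ = (∡ b c a).sign := (oangle_rotate_sign a b c).symm
      _ = (∡ b c d).sign := (oangle_sign_eq_of_sSameSide_line hbc).symm
      _ = (∡ c d b).sign := (oangle_rotate_sign b c d).symm
      _ = (∡ c d e).sign := (oangle_sign_eq_of_sSameSide_line hcd).symm
      _ = (∡ d e c).sign := (oangle_rotate_sign c d e).symm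
      _ = (∡ d e a).sign := (oangle_sign_eq_of_sSameSide_line hde).symm
  have hne : (∡ a b d).sign ≠ 0 := by
    have hne_ab : a ≠ b := by
      rintro rfl
      exact hbc.right_notMem (left_mem_affineSpan_pair ℝ _ _)
    exact fun hzero ↦ hab.right_notMem <|
      (oangle_sign_eq_zero_iff_collinear.1 hzero).mem_affineSpan_of_mem_of_ne
        (by simp) (by simp) (by simp) hne_ab
  rw [oangle_sign_eq_neg_sign_mul_of_vsub_eq_smul_vsub h] at hturn
  rw [← sign_eq_neg_one_iff]
  generalize (∡ a b d).sign = σ at hturn hne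
  generalize SignType.sign r = τ at hturn ⊢
  revert σ τ
  decide

end Orientation

namespace ConvexHexagon

variable {A B C D E F : Pt}

theorem rotate (h : ConvexHexagon A B C D E F) : ConvexHexagon B C D E F A :=
  ⟨h.2.1, h.2.2.1, h.2.2.2.1, h.2.2.2.2.1, h.2.2.2.2.2, h.1⟩

theorem neg_of_sub_eq_smul_sub (h : ConvexHexagon A B C D E F) {r : ℝ}
    (hr : E - D = r • (B - A)) : r < 0 := by
  obtain ⟨⟨hCD, -, -⟩, ⟨-, -, hDA⟩, ⟨-, -, hEB⟩, ⟨hFA, -, hFC⟩, -, -⟩ := h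
  have : Fact (Module.finrank ℝ Pt = 2) := ⟨finrank_euclideanSpace_fin⟩
  exact neg_of_vsub_eq_smul_vsub_of_sSameSide hCD hDA hEB (hFA.symm.trans hFC) hr

theorem inner_eq_neg_dist_mul_dist (h : ConvexHexagon A B C D E F)
    (hpar : ∃ r : ℝ, E - D = r • (B - A)) : ⟪B - A, E - D⟫ = -(dist A B * dist D E) := by
  obtain ⟨r, hr⟩ := hpar
  rw [dist_comm A B, dist_comm D E, dist_eq_norm, dist_eq_norm, hr, real_inner_smul_right,
    real_inner_self_eq_norm_sq, norm_smul, Real.norm_of_nonpos (h.neg_of_sub_eq_smul_sub hr).le]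
  ring

end ConvexHexagon

theorem usamo2021_p6_circumcenters_general {V : Type*} [NormedAddCommGroup V]
    [InnerProductSpace ℝ V] {A B C D E F : V}
    (hpar₁ : ∃ r : ℝ, E - D = r • (B - A))
    (hpar₂ : ∃ r : ℝ, F - E = r • (C - B))
    (hpar₃ : ∃ r : ℝ, A - F = r • (D - C))
    (hinner₁ : ⟪B - A, E - D⟫ = ⟪C - B, F - E⟫)
    (hinner₂ : ⟪C - B, F - E⟫ = ⟪D - C, A - F⟫)
    (hACE : ¬Collinear ℝ ({A, C, E} : Set V))
    (hA'C'E' : ¬Collinear ℝ ({C + E - D, E + A - F, A + C - B} : Set V)) :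
    (⟨![A, C, E], affineIndependent_iff_not_collinear_set.2 hACE⟩ :
        Triangle ℝ V).circumcenter =
      (⟨![C + E - D, E + A - F, A + C - B],
        affineIndependent_iff_not_collinear_set.2 hA'C'E'⟩ : Triangle ℝ V).circumcenter := by
  obtain ⟨r₁, h₁⟩ := hpar₁
  obtain ⟨r₂, h₂⟩ := hpar₂
  obtain ⟨r₃, h₃⟩ := hpar₃
  set T : Triangle ℝ V := ⟨![C + E - D, E + A - F, A + C - B],
    affineIndependent_iff_not_collinear_set.2 hA'C'E'⟩
  obtain ⟨hC, hpowC⟩ := mem_affineSpan_and_power_eq_inner_of_vsub_eq_smul_vsub (T := T) (p := C)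
    (show (0 : Fin 3) ≠ 2 by decide)
    ⟨-r₁, show C + E - D - C = -r₁ • (A + C - B - C) by linear_combination (norm := module) h₁⟩
  obtain ⟨hA, hpowA⟩ := mem_affineSpan_and_power_eq_inner_of_vsub_eq_smul_vsub (T := T) (p := A)
    (show (1 : Fin 3) ≠ 2 by decide)
    ⟨-r₂, show E + A - F - A = -r₂ • (A + C - B - A) by linear_combination (norm := module) -h₂⟩
  obtain ⟨hE, hpowE⟩ := mem_affineSpan_and_power_eq_inner_of_vsub_eq_smul_vsub (T := T) (p := E)
    (show (1 : Fin 3) ≠ 0 by decide)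
    ⟨-r₃, show E + A - F - E = -r₃ • (C + E - D - E) by linear_combination (norm := module) h₃⟩
  replace hpowC : T.circumsphere.power C = -⟪B - A, E - D⟫ :=
    calc T.circumsphere.power C = ⟪C + E - D - C, A + C - B - C⟫ := hpowC
      _ = ⟪E - D, -(B - A)⟫ := by congr 1 <;> abel
      _ = -⟪B - A, E - D⟫ := by rw [inner_neg_right, real_inner_comm]
  replace hpowA : T.circumsphere.power A = -⟪B - A, E - D⟫ :=
    calc T.circumsphere.power A = ⟪E + A - F - A, A + C - B - A⟫ := hpowA
      _ = ⟪-(F - E), C - B⟫ := by congr 1 <;> abel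
      _ = -⟪B - A, E - D⟫ := by rw [inner_neg_left, real_inner_comm, hinner₁]
  replace hpowE : T.circumsphere.power E = -⟪B - A, E - D⟫ :=
    calc T.circumsphere.power E = ⟪E + A - F - E, C + E - D - E⟫ := hpowE
      _ = ⟪A - F, -(D - C)⟫ := by congr 1 <;> abel
      _ = -⟪B - A, E - D⟫ := by rw [inner_neg_right, real_inner_comm, hinner₁, hinner₂]
  refine circumcenter_eq_of_power_eq (c := -⟪B - A, E - D⟫) ?_ ?_
  · intro i
    fin_cases i
    exacts [hA, hC, hE]
  · intro i
    fin_cases i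
    exacts [hpowA, hpowC, hpowE]

/-- For a convex hexagon `ABCDEF` as in USAMO 2021 Problem 6, with `A′ = C + E − D`,
`C′ = E + A − F`, `E′ = A + C − B`, the circumcenters of `ACE` and `A′C′E′` coincide. -/
theorem usamo2021_p6_circumcenters (A B C D E F : Pt)
    (hconv : ConvexHexagon A B C D E F)
    (hpar₁ : ∃ r : ℝ, E - D = r • (B - A))
    (hpar₂ : ∃ r : ℝ, F - E = r • (C - B))
    (hpar₃ : ∃ r : ℝ, A - F = r • (D - C))
    (hlen₁ : dist A B * dist D E = dist B C * dist E F)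
    (hlen₂ : dist B C * dist E F = dist C D * dist F A)
    (hACE : ¬Collinear ℝ ({A, C, E} : Set Pt))
    (hA'C'E' : ¬Collinear ℝ ({C + E - D, E + A - F, A + C - B} : Set Pt)) :
    (⟨![A, C, E], affineIndependent_iff_not_collinear_set.2 hACE⟩ :
        Triangle ℝ Pt).circumcenter =
      (⟨![C + E - D, E + A - F, A + C - B],
        affineIndependent_iff_not_collinear_set.2 hA'C'E'⟩ : Triangle ℝ Pt).circumcenter :=
  usamo2021_p6_circumcenters_general hpar₁ hpar₂ hpar₃
    (by rw [hconv.inner_eq_neg_dist_mul_dist hpar₁, hconv.rotate.inner_eq_neg_dist_mul_dist hpar₂,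
      hlen₁])
    (by rw [hconv.rotate.inner_eq_neg_dist_mul_dist hpar₂,
      hconv.rotate.rotate.inner_eq_neg_dist_mul_dist hpar₃, hlen₂])
    hACE hA'C'E'
end
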